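/- arXiv:2406.18446 — 2 statements merged into one kernel-verified Lean document; each statement's English description precedes it below -/
import Mathlib

section
/- There exists an absolute constant c > 0 such that for every radial weight ω and every a ∈ 𝔻 with a ≠ 0, ∫_𝔻 |B^ω_a(ζ)| ω(ζ) dA(ζ) ≥ (c/|a|) · log(1/(1−|a|)). In particular, sup_{a∈𝔻} ∫_𝔻 |B^ω_a(ζ)| ω(ζ) dA(ζ) = ∞, and consequently P_ω is not bounded from L^∞ to H^∞ for any radial weight ω. -/
open MeasureTheory Set Complex
open scoped ENNReal

noncomputable section

/-- The open unit disc in the complex plane. -/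
def unitDisc : Set ℂ := Metric.ball 0 1

/-- Tail integral `ω̂(r) = ∫_r^1 ω(s) ds`. -/
def tl (ω : ℝ → ℝ) (r : ℝ) : ℝ := ∫ s in r..1, ω s

/-- Moment `ω_x = ∫_0^1 s^x ω(s) ds` (real power in the exponent). -/
def mom (ω : ℝ → ℝ) (x : ℝ) : ℝ := ∫ s in (0:ℝ)..1, s ^ x * ω s

/-- `ω` is a radial weight: nonnegative and integrable on `[0,1)`, with positive
tail integrals. -/
def IsRadialWeight (ω : ℝ → ℝ) : Prop :=
  (∀ s ∈ Ico (0:ℝ) 1, 0 ≤ ω s) ∧ IntegrableOn ω (Ico (0:ℝ) 1) ∧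
    ∀ r ∈ Ico (0:ℝ) 1, 0 < tl ω r

/-- The upper doubling class `D̂`: `sup_{0≤r<1} ω̂(r)/ω̂((1+r)/2) < ∞`. -/
def Dhat (ω : ℝ → ℝ) : Prop :=
  ∃ C : ℝ, ∀ r ∈ Ico (0:ℝ) 1, tl ω r ≤ C * tl ω ((1 + r) / 2)

/-- The class `Ď`: there are `K > 1`, `C > 1` with `ω̂(r) ≥ C ω̂(1 - (1-r)/K)`. -/
def Dcheck (ω : ℝ → ℝ) : Prop :=
  ∃ K C : ℝ, 1 < K ∧ 1 < C ∧ ∀ r ∈ Ico (0:ℝ) 1, C * tl ω (1 - (1 - r) / K) ≤ tl ω r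

/-- The class `D = D̂ ∩ Ď`. -/
def DD (ω : ℝ → ℝ) : Prop := Dhat ω ∧ Dcheck ω

/-- The Bergman reproducing kernel `B^ω_z(ζ) = Σ_n (conj z · ζ)^n / (2 ω_{2n+1})`. -/
def bKer (ω : ℝ → ℝ) (z ζ : ℂ) : ℂ :=
  ∑' n : ℕ, (starRingEnd ℂ z * ζ) ^ n / ((2 * mom ω (2 * (n : ℝ) + 1) : ℝ) : ℂ)

/-- The integrand of the Bergman projection. -/
def bInt (ω : ℝ → ℝ) (f : ℂ → ℂ) (z ζ : ℂ) : ℂ :=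
  f ζ * starRingEnd ℂ (bKer ω z ζ) * ((ω ‖ζ‖ : ℝ) : ℂ)

/-- The Bergman projection `P_ω f(z) = ∫_𝔻 f(ζ) conj(B^ω_z(ζ)) ω(ζ) dA(ζ)`,
where `dA` is normalized area measure `dx dy / π`. -/
def bProj (ω : ℝ → ℝ) (f : ℂ → ℂ) (z : ℂ) : ℂ :=
  (Real.pi : ℂ)⁻¹ * ∫ ζ in unitDisc, bInt ω f z ζ

/-- The weighted sup-norm `ess sup_{z ∈ 𝔻} |f(z)| v(|z|)`, valued in `ℝ≥0∞`. -/
def wSup (v : ℝ → ℝ) (f : ℂ → ℂ) : ℝ≥0∞ :=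
  essSup (fun z => ENNReal.ofReal (‖f z‖ * v ‖z‖)) (volume.restrict unitDisc)

/-- `P_ω : L^∞_v → H^∞_v` is bounded: there is `C > 0` so that for every
`f ∈ L^∞_v` the defining integral converges absolutely at every point of `𝔻`,
`P_ω f` is analytic on `𝔻`, and `‖P_ω f‖_{L^∞_v} ≤ C ‖f‖_{L^∞_v}`. -/
def ProjBddH (ω v : ℝ → ℝ) : Prop :=
  ∃ C : ℝ, 0 < C ∧ ∀ f : ℂ → ℂ,
    AEStronglyMeasurable f (volume.restrict unitDisc) → wSup v f < ⊤ →
    (∀ z ∈ unitDisc, IntegrableOn (bInt ω f z) unitDisc) ∧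
    DifferentiableOn ℂ (bProj ω f) unitDisc ∧
    wSup v (bProj ω f) ≤ ENNReal.ofReal C * wSup v f

/-- `P_ω : L^∞_v → B^∞_v` is bounded: there is `C > 0` so that for every
`f ∈ L^∞_v` the defining integral converges absolutely at every point of `𝔻`,
`P_ω f` is analytic on `𝔻`, and `‖P_ω f‖_{B^∞_v} ≤ C ‖f‖_{L^∞_v}`. -/
def ProjBddB (ω v : ℝ → ℝ) : Prop :=
  ∃ C : ℝ, 0 < C ∧ ∀ f : ℂ → ℂ,
    AEStronglyMeasurable f (volume.restrict unitDisc) → wSup v f < ⊤ →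
    (∀ z ∈ unitDisc, IntegrableOn (bInt ω f z) unitDisc) ∧
    DifferentiableOn ℂ (bProj ω f) unitDisc ∧
    ∀ z ∈ unitDisc,
      ENNReal.ofReal ((1 - ‖z‖) * v ‖z‖ * ‖deriv (bProj ω f) z‖) ≤
        ENNReal.ofReal C * wSup v f

/-- The moment condition `sup_{x ≥ 0} (ν_x / ω_{2x}) (ω/ν̂)_x < ∞`. -/
def MomCond (ω ν : ℝ → ℝ) : Prop :=
  ∃ C : ℝ, ∀ x : ℝ, 0 ≤ x →
    mom ν x / mom ω (2 * x) * mom (fun s => ω s / tl ν s) x ≤ C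

/-- The tail condition `sup_{0 ≤ r < 1} (ν̂(r)/ω̂(r)) ∫_r^1 ω(s)/ν̂(s) ds < ∞`. -/
def TailCond (ω ν : ℝ → ℝ) : Prop :=
  ∃ C : ℝ, ∀ r ∈ Ico (0:ℝ) 1, tl ν r / tl ω r * tl (fun s => ω s / tl ν s) r ≤ C


lemma mom_eq_Ioo (ω : ℝ → ℝ) (x : ℝ) : mom ω x = ∫ s in Ioo (0:ℝ) 1, s ^ x * ω s := by
  rw [mom, intervalIntegral.integral_of_le zero_le_one, integral_Ioc_eq_integral_Ioo]

lemma mom_integrable {ω : ℝ → ℝ} (h : IsRadialWeight ω) {x : ℝ} (hx : 0 ≤ x) :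
    IntegrableOn (fun s => s ^ x * ω s) (Ioo (0:ℝ) 1) := by
  have h1 : IntegrableOn ω (Ioo (0:ℝ) 1) := h.2.1.mono_set Ioo_subset_Ico_self
  refine Integrable.bdd_mul (c := 1) h1 ?_ ?_
  · exact (by fun_prop : Measurable fun s : ℝ => s ^ x).aestronglyMeasurable
  · filter_upwards [self_mem_ae_restrict measurableSet_Ioo] with s hs
    rw [Real.norm_of_nonneg (Real.rpow_nonneg hs.1.le _)]
    exact Real.rpow_le_one hs.1.le hs.2.le hx

lemma mom_anti {ω : ℝ → ℝ} (h : IsRadialWeight ω) {x y : ℝ} (hx : 0 ≤ x) (hxy : x ≤ y) :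
    mom ω y ≤ mom ω x := by
  rw [mom_eq_Ioo, mom_eq_Ioo]
  refine setIntegral_mono_on (mom_integrable h (hx.trans hxy)) (mom_integrable h hx)
    measurableSet_Ioo ?_
  intro s hs
  exact mul_le_mul_of_nonneg_right
    (Real.rpow_le_rpow_of_exponent_ge hs.1 hs.2.le hxy) (h.1 s ⟨hs.1.le, hs.2⟩)

lemma mom_ge {ω : ℝ → ℝ} (h : IsRadialWeight ω) {x r : ℝ} (hx : 0 ≤ x) (hr : r ∈ Ioo (0:ℝ) 1) :
    r ^ x * tl ω r ≤ mom ω x := by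
  rw [mom_eq_Ioo, tl, intervalIntegral.integral_of_le hr.2.le, integral_Ioc_eq_integral_Ioo,
    ← integral_const_mul]
  have hsub : Ioo r 1 ⊆ Ioo (0:ℝ) 1 := Ioo_subset_Ioo_left hr.1.le
  have h1 : IntegrableOn ω (Ioo (0:ℝ) 1) := h.2.1.mono_set Ioo_subset_Ico_self
  calc ∫ s in Ioo r 1, r ^ x * ω s ≤ ∫ s in Ioo r 1, s ^ x * ω s := by
        refine setIntegral_mono_on ((h1.mono_set hsub).const_mul _)
          ((mom_integrable h hx).mono_set hsub) measurableSet_Ioo ?_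
        intro s hs
        exact mul_le_mul_of_nonneg_right (Real.rpow_le_rpow hr.1.le hs.1.le hx)
          (h.1 s ⟨(hsub hs).1.le, hs.2⟩)
    _ ≤ _ := by
        refine setIntegral_mono_set (mom_integrable h hx) ?_ (hsub.eventuallyLE)
        filter_upwards [self_mem_ae_restrict measurableSet_Ioo] with s hs
        exact mul_nonneg (Real.rpow_nonneg hs.1.le _) (h.1 s ⟨hs.1.le, hs.2⟩)

lemma mom_pos {ω : ℝ → ℝ} (h : IsRadialWeight ω) {x : ℝ} (hx : 0 ≤ x) : 0 < mom ω x :=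
  lt_of_lt_of_le (mul_pos (Real.rpow_pos_of_pos (by norm_num) _)
    (h.2.2 (1/2) ⟨by norm_num, by norm_num⟩)) (mom_ge h hx (r := 1/2) ⟨by norm_num, by norm_num⟩)

lemma lintegral_mom {ω : ℝ → ℝ} (h : IsRadialWeight ω) {x : ℝ} (hx : 0 ≤ x) :
    ∫⁻ s in Ioo (0:ℝ) 1, ENNReal.ofReal (s ^ x * ω s) = ENNReal.ofReal (mom ω x) := by
  rw [mom_eq_Ioo, ofReal_integral_eq_lintegral_ofReal (mom_integrable h hx)]
  filter_upwards [self_mem_ae_restrict measurableSet_Ioo] with s hs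
  exact mul_nonneg (Real.rpow_nonneg hs.1.le _) (h.1 s ⟨hs.1.le, hs.2⟩)

/-- Summability of the kernel coefficients. -/
lemma ker_summable {ω : ℝ → ℝ} (h : IsRadialWeight ω) {ρ : ℝ} (h0 : 0 ≤ ρ) (h1 : ρ < 1) :
    Summable fun n : ℕ => ρ ^ n / (2 * mom ω (2 * (n : ℝ) + 1)) := by
  obtain ⟨q, hq1, hq2⟩ := exists_between h1
  have hq0 : 0 < q := h0.trans_lt hq1
  set r := Real.sqrt q with hr
  have hr0 : 0 < r := Real.sqrt_pos.2 hq0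
  have hr1 : r < 1 := by rw [hr, Real.sqrt_lt' one_pos]; simpa using hq2
  have hrr : r ^ 2 = q := Real.sq_sqrt hq0.le
  have ht : 0 < tl ω r := h.2.2 r ⟨hr0.le, hr1⟩
  have hg : Summable fun n : ℕ => (ρ / q) ^ n :=
    summable_geometric_of_lt_one (by positivity) ((div_lt_one hq0).2 hq1)
  refine Summable.of_nonneg_of_le ?_ ?_ (hg.mul_left (1 / (2 * (r * tl ω r))))
  · intro n
    have := mom_pos h (x := 2 * (n:ℝ) + 1) (by positivity)
    positivity
  · intro n
    have h2 := mom_ge h (x := 2 * (n:ℝ) + 1) (by positivity) ⟨hr0, hr1⟩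
    have h3 : r ^ (2 * (n:ℝ) + 1) = q ^ n * r := by
      rw [← hrr, ← pow_mul, ← pow_succ, ← Real.rpow_natCast]; push_cast; rfl
    rw [h3] at h2
    calc ρ ^ n / (2 * mom ω (2 * (n : ℝ) + 1)) ≤ ρ ^ n / (2 * (q ^ n * r * tl ω r)) := by
          gcongr
      _ = _ := by rw [div_pow]; field_simp

/-- The kernel as a function of one variable. -/
def kK (ω : ℝ → ℝ) (w : ℂ) : ℂ := ∑' n : ℕ, w ^ n / ((2 * mom ω (2 * (n : ℝ) + 1) : ℝ) : ℂ)

lemma norm_term {ω : ℝ → ℝ} (h : IsRadialWeight ω) (w : ℂ) (n : ℕ) :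
    ‖w ^ n / ((2 * mom ω (2 * (n : ℝ) + 1) : ℝ) : ℂ)‖ =
      ‖w‖ ^ n / (2 * mom ω (2 * (n : ℝ) + 1)) := by
  have := mom_pos h (x := 2 * (n:ℝ) + 1) (by positivity)
  rw [norm_div, norm_pow, Complex.norm_real, Real.norm_of_nonneg (by positivity)]

lemma kK_contOn {ω : ℝ → ℝ} (h : IsRadialWeight ω) : ContinuousOn (kK ω) unitDisc := by
  intro w hw
  have hw1 : ‖w‖ < 1 := by simpa [unitDisc] using hw
  obtain ⟨ρ, h1, h2⟩ := exists_between hw1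
  have h0 : 0 ≤ ρ := (norm_nonneg w).trans h1.le
  have hc : ContinuousOn (kK ω) (Metric.ball 0 ρ) := by
    refine continuousOn_tsum (fun n => by fun_prop) (ker_summable h h0 h2) ?_
    intro n x hx
    rw [norm_term h]
    have hx : ‖x‖ < ρ := by simpa using hx
    have := mom_pos h (x := 2 * (n:ℝ) + 1) (by positivity)
    gcongr
  exact (hc.continuousAt (Metric.isOpen_ball.mem_nhds (by simpa using h1))).continuousWithinAt

lemma angle_int (m : ℕ) (hm : m ≠ 0) :
    ∫ u in (-Real.pi)..Real.pi, (u:ℂ) * cexp (Complex.I * m * u) =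
      2 * Real.pi * (-1) ^ m / (Complex.I * m) := by
  have hm' : (m:ℂ) ≠ 0 := by exact_mod_cast hm
  have hI := Complex.I_ne_zero
  have key : ∀ u ∈ Set.uIcc (-Real.pi) Real.pi, HasDerivAt
      (fun u : ℝ => (u:ℂ) * cexp (Complex.I * m * u) / (Complex.I * m) +
        cexp (Complex.I * m * u) / m ^ 2)
      ((u:ℂ) * cexp (Complex.I * m * u)) u := by
    intro u _
    have e : HasDerivAt (fun u : ℝ => cexp (Complex.I * m * u))
        (cexp (Complex.I * m * u) * (Complex.I * m * 1)) u :=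
      ((hasDerivAt_id u).ofReal_comp.const_mul _).cexp
    have := (((hasDerivAt_id u).ofReal_comp.mul e).div_const (Complex.I * m)).add
      (e.div_const ((m:ℂ) ^ 2))
    refine this.congr_deriv ?_
    simp only [id]
    push_cast
    field_simp
    linear_combination Complex.I_sq
  rw [intervalIntegral.integral_eq_sub_of_hasDerivAt key]
  · have e1 : cexp (Complex.I * m * (Real.pi : ℝ)) = (-1) ^ m := by
      rw [← Complex.exp_pi_mul_I, ← Complex.exp_nat_mul]; congr 1; ring
    have e2 : cexp (Complex.I * m * ((-Real.pi : ℝ) : ℂ)) = (-1) ^ m := by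
      have : Complex.I * m * ((-Real.pi : ℝ) : ℂ) = -(Complex.I * m * (Real.pi : ℝ)) := by
        push_cast; ring
      rw [this, Complex.exp_neg, e1, ← inv_pow]; norm_num
    rw [e1, e2]; push_cast; field_simp; ring
  · apply Continuous.intervalIntegrable; fun_prop

lemma angle_hasSum {ω : ℝ → ℝ} (h : IsRadialWeight ω) {ρ : ℝ} (h0 : 0 ≤ ρ) (h1 : ρ < 1) :
    HasSum (fun n : ℕ => Real.pi * (ρ ^ n / ((n + 1) * mom ω (2 * (n : ℝ) + 1))))
      (∫ u in (-Real.pi)..Real.pi,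
        ((-Complex.I) * u * cexp (Complex.I * u)) * kK ω (-(ρ * cexp (Complex.I * u)))).re := by
  set F : ℕ → ℝ → ℂ := fun n u => ((-Complex.I) * u * cexp (Complex.I * u)) *
    ((-(ρ * cexp (Complex.I * u))) ^ n / ((2 * mom ω (2 * (n : ℝ) + 1) : ℝ) : ℂ)) with hF
  have hexp : ∀ u : ℝ, ‖cexp (Complex.I * u)‖ = 1 := fun u => by
    rw [mul_comm]; exact Complex.norm_exp_ofReal_mul_I u
  have hw : ∀ u : ℝ, ‖(-(ρ * cexp (Complex.I * u)) : ℂ)‖ = ρ := fun u => by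
    rw [norm_neg, norm_mul, hexp, Complex.norm_real, Real.norm_of_nonneg h0, mul_one]
  have hs := intervalIntegral.hasSum_integral_of_dominated_convergence (μ := volume)
    (a := -Real.pi) (b := Real.pi) (F := F)
    (f := fun u : ℝ => ((-Complex.I) * u * cexp (Complex.I * u)) *
      kK ω (-(ρ * cexp (Complex.I * u))))
    (fun n _ => Real.pi * (ρ ^ n / (2 * mom ω (2 * (n : ℝ) + 1)))) ?_ ?_ ?_ ?_ ?_
  · have hre := Complex.hasSum_re hs
    convert hre using 2 with n
    have hmp := mom_pos h (x := 2 * (n:ℝ) + 1) (by positivity)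
    have : ∀ u : ℝ, F n u = (-Complex.I * (-1) ^ n * ρ ^ n / ((2 * mom ω (2 * (n : ℝ) + 1) : ℝ) : ℂ))
        * ((u:ℂ) * cexp (Complex.I * ((n + 1 : ℕ) : ℂ) * u)) := by
      intro u
      have e : cexp (Complex.I * ((n + 1 : ℕ) : ℂ) * u) =
          cexp (Complex.I * u) ^ n * cexp (Complex.I * u) := by
        rw [← pow_succ, ← Complex.exp_nat_mul]; congr 1; ring
      simp only [hF]
      rw [e, neg_pow, mul_pow]
      ring
    simp_rw [this]
    rw [intervalIntegral.integral_const_mul, angle_int _ (Nat.succ_ne_zero n)]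
    have hI := Complex.I_ne_zero
    have hn : ((n:ℂ) + 1) ≠ 0 := by exact_mod_cast Nat.succ_ne_zero n
    have hm' : ((mom ω (2 * (n : ℝ) + 1) : ℝ) : ℂ) ≠ 0 := by exact_mod_cast hmp.ne'
    have hsq : ((-1 : ℂ) ^ n) * (-1) ^ (n + 1) = -1 := by
      rw [pow_succ, ← mul_assoc, ← mul_pow]; simp
    have : -Complex.I * (-1) ^ n * (ρ:ℂ) ^ n / ((2 * mom ω (2 * (n : ℝ) + 1) : ℝ) : ℂ) *
        (2 * Real.pi * (-1) ^ (n + 1) / (Complex.I * ((n + 1 : ℕ) : ℂ))) =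
        ((Real.pi * (ρ ^ n / ((n + 1) * mom ω (2 * (n : ℝ) + 1))) : ℝ) : ℂ) := by
      push_cast
      field_simp
      linear_combination (-(ρ:ℂ) ^ n) * hsq
    rw [Nat.succ_eq_add_one, this, Complex.ofReal_re]
  · intro n
    have : Continuous (F n) := by simp only [hF]; fun_prop
    exact this.aestronglyMeasurable
  · intro n
    refine Filter.Eventually.of_forall fun u hu => ?_
    rw [uIoc_of_le (by linarith [Real.pi_pos])] at hu
    simp only [hF]
    rw [norm_mul, norm_term h, hw, norm_mul, norm_mul, hexp, norm_neg, Complex.norm_I, one_mul,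
      mul_one, Complex.norm_real]
    have hmp := mom_pos h (x := 2 * (n:ℝ) + 1) (by positivity)
    have : ‖u‖ ≤ Real.pi := abs_le.2 ⟨hu.1.le, hu.2⟩
    gcongr
  · exact Filter.Eventually.of_forall fun u hu => (ker_summable h h0 h1).mul_left _
  · exact intervalIntegrable_const
  · refine Filter.Eventually.of_forall fun u hu => ?_
    refine HasSum.mul_left _ (Summable.hasSum ?_)
    refine Summable.of_norm ?_
    simp_rw [norm_term h, hw]
    exact ker_summable h h0 h1

/-- Hardy type lower bound on each circle. -/
lemma circle_bound {ω : ℝ → ℝ} (h : IsRadialWeight ω) {ρ : ℝ} (h0 : 0 ≤ ρ) (h1 : ρ < 1) :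
    ∑' n : ℕ, ENNReal.ofReal (ρ ^ n / ((n + 1) * mom ω (2 * (n : ℝ) + 1))) ≤
      ∫⁻ u in Ioo (-Real.pi) Real.pi, ENNReal.ofReal ‖kK ω (-(ρ * cexp (Complex.I * u)))‖ := by
  have hs := angle_hasSum h h0 h1
  have hexp : ∀ u : ℝ, ‖cexp (Complex.I * u)‖ = 1 := fun u => by
    rw [mul_comm]; exact Complex.norm_exp_ofReal_mul_I u
  have hnn : ∀ n : ℕ, 0 ≤ ρ ^ n / ((n + 1) * mom ω (2 * (n : ℝ) + 1)) := fun n => by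
    have hmp := mom_pos h (x := 2 * (n:ℝ) + 1) (by positivity)
    positivity
  have hpi := Real.pi_pos
  set J := ∫ u in (-Real.pi)..Real.pi,
        ((-Complex.I) * u * cexp (Complex.I * u)) * kK ω (-(ρ * cexp (Complex.I * u))) with hJ
  have hsm : Summable fun n : ℕ => ρ ^ n / ((n + 1) * mom ω (2 * (n : ℝ) + 1)) :=
    (summable_mul_left_iff hpi.ne').1 hs.summable
  have key : ENNReal.ofReal Real.pi *
      ∑' n : ℕ, ENNReal.ofReal (ρ ^ n / ((n + 1) * mom ω (2 * (n : ℝ) + 1))) ≤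
      ENNReal.ofReal Real.pi *
      ∫⁻ u in Ioo (-Real.pi) Real.pi, ENNReal.ofReal ‖kK ω (-(ρ * cexp (Complex.I * u)))‖ := by
    rw [← ENNReal.ofReal_tsum_of_nonneg hnn hsm, ← ENNReal.ofReal_mul hpi.le, ← tsum_mul_left,
      hs.tsum_eq, ← lintegral_const_mul' _ _ ENNReal.ofReal_ne_top]
    calc ENNReal.ofReal J.re ≤ ENNReal.ofReal ‖J‖ := ENNReal.ofReal_le_ofReal (Complex.re_le_norm J)
      _ = ‖J‖ₑ := ofReal_norm J
      _ ≤ _ := by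
        rw [hJ, intervalIntegral.integral_of_le (by linarith), integral_Ioc_eq_integral_Ioo]
        refine (enorm_integral_le_lintegral_enorm _).trans ?_
        refine setLIntegral_mono' measurableSet_Ioo ?_
        intro u hu
        rw [← ofReal_norm, ← ENNReal.ofReal_mul hpi.le]
        refine ENNReal.ofReal_le_ofReal ?_
        rw [norm_mul, norm_mul, norm_mul, hexp, norm_neg, Complex.norm_I, one_mul,
          mul_one, Complex.norm_real]
        have : ‖u‖ ≤ Real.pi := abs_le.2 ⟨hu.1.le, hu.2.le⟩
        gcongr
  exact (ENNReal.mul_le_mul_iff_right (by simpa using hpi) ENNReal.ofReal_ne_top).1 key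

lemma radial_bound {ω : ℝ → ℝ} (h : IsRadialWeight ω) {x : ℝ} (h0 : 0 < x) (h1 : x < 1) :
    ENNReal.ofReal (1 / x * Real.log (1 / (1 - x))) ≤
      ∫⁻ r in Ioo (0:ℝ) 1, ENNReal.ofReal (r * ω r) *
       ∫⁻ u in Ioo (-Real.pi) Real.pi,
        ENNReal.ofReal ‖kK ω (-(((x * r : ℝ) : ℂ) * cexp (Complex.I * u)))‖ := by
  have hlog : HasSum (fun n : ℕ => x ^ n / (n + 1)) (1 / x * Real.log (1 / (1 - x))) := by
    have := (Real.hasSum_pow_div_log_of_abs_lt_one (x := x) (by rwa [abs_of_pos h0])).mul_left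
      (1 / x)
    rw [one_div (1 - x), Real.log_inv]
    have e : (fun n : ℕ => x ^ n / ((n:ℝ) + 1)) =
        fun n : ℕ => 1 / x * (x ^ (n + 1) / ((n:ℝ) + 1)) := by
      ext n
      rw [pow_succ]
      field_simp
    rw [e]
    exact this
  have hω : AEMeasurable ω (volume.restrict (Ioo (0:ℝ) 1)) :=
    (h.2.1.mono_set Ioo_subset_Ico_self).aemeasurable
  calc ENNReal.ofReal (1 / x * Real.log (1 / (1 - x)))
      = ∑' n : ℕ, ENNReal.ofReal (x ^ n / (n + 1)) := by
        rw [← hlog.tsum_eq, ENNReal.ofReal_tsum_of_nonneg (fun n => by positivity) hlog.summable]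
    _ ≤ ∑' n : ℕ, ENNReal.ofReal (x ^ n / ((n + 1) * mom ω (2 * (n : ℝ) + 1))) *
          ENNReal.ofReal (mom ω ((n:ℝ) + 1)) := by
        refine ENNReal.tsum_le_tsum fun n => ?_
        have hmp := mom_pos h (x := 2 * (n:ℝ) + 1) (by positivity)
        have hle : mom ω (2 * (n:ℝ) + 1) ≤ mom ω ((n:ℝ) + 1) :=
          mom_anti h (by positivity) (by linarith [n.cast_nonneg (α := ℝ)])
        rw [← ENNReal.ofReal_mul (by positivity)]
        refine ENNReal.ofReal_le_ofReal ?_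
        calc x ^ n / (n + 1) = x ^ n / ((n + 1) * mom ω (2 * (n : ℝ) + 1)) *
              mom ω (2 * (n:ℝ) + 1) := by
                rw [← div_div, div_mul_cancel₀ _ hmp.ne']
          _ ≤ _ := by gcongr
    _ = ∑' n : ℕ, ∫⁻ r in Ioo (0:ℝ) 1,
          ENNReal.ofReal (x ^ n / ((n + 1) * mom ω (2 * (n : ℝ) + 1))) *
          ENNReal.ofReal (r ^ ((n:ℝ) + 1) * ω r) := by
        congr 1; ext n
        rw [lintegral_const_mul' _ _ ENNReal.ofReal_ne_top, lintegral_mom h (by positivity)]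
    _ = ∫⁻ r in Ioo (0:ℝ) 1, ∑' n : ℕ,
          ENNReal.ofReal (x ^ n / ((n + 1) * mom ω (2 * (n : ℝ) + 1))) *
          ENNReal.ofReal (r ^ ((n:ℝ) + 1) * ω r) := by
        rw [lintegral_tsum]
        intro n
        have : AEMeasurable (fun r : ℝ => r ^ ((n:ℝ) + 1) * ω r)
          (volume.restrict (Ioo (0:ℝ) 1)) := (mom_integrable h (by positivity)).aemeasurable
        exact this.ennreal_ofReal.const_mul _
    _ ≤ _ := by
        refine setLIntegral_mono' measurableSet_Ioo ?_
        intro r hr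
        have hxr0 : 0 ≤ x * r := mul_nonneg h0.le hr.1.le
        have hxr1 : x * r < 1 := by nlinarith [hr.1, hr.2]
        refine le_trans (le_of_eq ?_) (mul_le_mul_right (circle_bound h hxr0 hxr1) _)
        rw [← ENNReal.tsum_mul_left]
        congr 1; ext n
        have hmp := mom_pos h (x := 2 * (n:ℝ) + 1) (by positivity)
        have hwr := h.1 r ⟨hr.1.le, hr.2⟩
        have hr0 := hr.1
        rw [← ENNReal.ofReal_mul (by positivity), ← ENNReal.ofReal_mul (by positivity)]
        congr 1
        rw [Real.rpow_add_one hr0.ne', Real.rpow_natCast, mul_pow]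
        field_simp

/-- Polar coordinates. -/
lemma polar_eq {ω : ℝ → ℝ} (h : IsRadialWeight ω) {x : ℝ} (h0 : 0 < x) (h1 : x < 1) :
    ∫⁻ ζ in unitDisc, ENNReal.ofReal (‖kK ω (-(x * ζ))‖ * ω ‖ζ‖) =
      ∫⁻ r in Ioo (0:ℝ) 1, ENNReal.ofReal (r * ω r) *
       ∫⁻ u in Ioo (-Real.pi) Real.pi,
        ENNReal.ofReal ‖kK ω (-(((x * r : ℝ) : ℂ) * cexp (Complex.I * u)))‖ := by
  have hmD : MeasurableSet unitDisc := Metric.isOpen_ball.measurableSet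
  have hω : AEMeasurable ω (volume.restrict (Ioo (0:ℝ) 1)) :=
    (h.2.1.mono_set Ioo_subset_Ico_self).aemeasurable
  set G : ℝ → ℝ → ℝ≥0∞ := fun r u =>
     ENNReal.ofReal ‖kK ω (-(((x * r : ℝ) : ℂ) * cexp (Complex.I * u)))‖ with hG
  have hGm : AEMeasurable (fun p : ℝ × ℝ => G p.1 p.2)
      (volume.restrict (Ioo (0:ℝ) 1 ×ˢ Ioo (-Real.pi) Real.pi)) := by
    have : ContinuousOn (fun p : ℝ × ℝ => kK ω (-(((x * p.1 : ℝ) : ℂ) * cexp (Complex.I * p.2))))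
        (Ioo (0:ℝ) 1 ×ˢ Ioo (-Real.pi) Real.pi) := by
      refine (kK_contOn h).comp (by fun_prop) ?_
      intro p hp
      have hp1 := hp.1
      have : ‖cexp (Complex.I * p.2)‖ = 1 := by
        rw [mul_comm]; exact Complex.norm_exp_ofReal_mul_I _
      simp only [unitDisc, mem_ball_zero_iff, norm_neg, norm_mul, this, Complex.norm_real, mul_one,
        Real.norm_of_nonneg h0.le, Real.norm_of_nonneg hp1.1.le]
      nlinarith [hp1.1, hp1.2]
    have := (this.norm.aemeasurable (μ := volume) (measurableSet_Ioo.prod measurableSet_Ioo))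
    exact this.ennreal_ofReal
  rw [← lintegral_indicator hmD, ← Complex.lintegral_comp_polarCoord_symm]
  have e1 : ∀ p ∈ polarCoord.target, ENNReal.ofReal p.1 •
      unitDisc.indicator (fun ζ => ENNReal.ofReal (‖kK ω (-(x * ζ))‖ * ω ‖ζ‖))
        (Complex.polarCoord.symm p) =
      (Ioo (0:ℝ) 1 ×ˢ Ioo (-Real.pi) Real.pi).indicator
        (fun p => ENNReal.ofReal (p.1 * ω p.1) * G p.1 p.2) p := by
    intro p hp
    have hp1 : 0 < p.1 := hp.1
    have hn : ‖Complex.polarCoord.symm p‖ = p.1 := by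
      rw [Complex.norm_polarCoord_symm, abs_of_pos hp1]
    by_cases hlt : p.1 < 1
    · have m1 : Complex.polarCoord.symm p ∈ unitDisc := by
        simpa only [unitDisc, mem_ball_zero_iff, hn] using hlt
      have m2 : p ∈ Ioo (0:ℝ) 1 ×ˢ Ioo (-Real.pi) Real.pi := ⟨⟨hp1, hlt⟩, hp.2⟩
      rw [indicator_of_mem m1, indicator_of_mem m2, hn, smul_eq_mul]
      have hw := h.1 p.1 ⟨hp1.le, hlt⟩
      simp only [hG]
      rw [← ENNReal.ofReal_mul hp1.le, ← ENNReal.ofReal_mul (by positivity)]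
      have : (x:ℂ) * Complex.polarCoord.symm p =
          ((x * p.1 : ℝ) : ℂ) * cexp (Complex.I * p.2) := by
        rw [Complex.polarCoord_symm_apply, mul_comm Complex.I, Complex.exp_mul_I]
        push_cast; ring
      rw [this]
      congr 1; ring
    · have m1 : Complex.polarCoord.symm p ∉ unitDisc := by
        simpa only [unitDisc, mem_ball_zero_iff, hn] using hlt
      have m2 : p ∉ Ioo (0:ℝ) 1 ×ˢ Ioo (-Real.pi) Real.pi := fun q => hlt q.1.2
      rw [indicator_of_notMem m1, indicator_of_notMem m2, smul_zero]
  rw [setLIntegral_congr_fun polarCoord.open_target.measurableSet e1,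
    setLIntegral_indicator (measurableSet_Ioo.prod measurableSet_Ioo)]
  have e2 : (Ioo (0:ℝ) 1 ×ˢ Ioo (-Real.pi) Real.pi) ∩ polarCoord.target =
      Ioo (0:ℝ) 1 ×ˢ Ioo (-Real.pi) Real.pi :=
    inter_eq_left.2 fun p hp => ⟨hp.1.1, hp.2⟩
  rw [e2, Measure.volume_eq_prod, ← Measure.prod_restrict, lintegral_prod]
  · refine lintegral_congr fun r => ?_
    simp only
    rw [lintegral_const_mul' _ _ ENNReal.ofReal_ne_top]
  · rw [Measure.volume_eq_prod, ← Measure.prod_restrict] at hGm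
    refine AEMeasurable.mul ?_ hGm
    have : AEMeasurable (fun r => ENNReal.ofReal (r * ω r)) (volume.restrict (Ioo (0:ℝ) 1)) :=
      (aemeasurable_id.mul hω).ennreal_ofReal
    exact this.comp_quasiMeasurePreserving Measure.quasiMeasurePreserving_fst

lemma rotate_eq {ω : ℝ → ℝ} {a : ℂ} (ha : a ≠ 0) :
    ∫⁻ ζ in unitDisc, ENNReal.ofReal (‖bKer ω a ζ‖ * ω ‖ζ‖) =
    ∫⁻ ζ in unitDisc, ENNReal.ofReal (‖kK ω (-((‖a‖:ℝ) * ζ))‖ * ω ‖ζ‖) := by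
  have hna : (‖a‖ : ℂ) ≠ 0 := by simpa using ha
  have hc : ‖-(a / (‖a‖:ℂ))‖ = 1 := by
    rw [norm_neg, norm_div, Complex.norm_real, norm_norm, div_self (by simpa using ha)]
  set c : Circle := ⟨-(a / (‖a‖:ℂ)), by simpa [Submonoid.unitSphere] using hc⟩ with hcd
  have hcv : (c : ℂ) = -(a / (‖a‖:ℂ)) := rfl
  have hmp : MeasurePreserving (rotation c) := (rotation c).measurePreserving
  have hpre : (rotation c) ⁻¹' unitDisc = unitDisc := by
    ext z
    simp only [unitDisc, mem_preimage, mem_ball_zero_iff, LinearIsometryEquiv.norm_map]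
  have := hmp.setLIntegral_comp_preimage_emb (rotation c).toHomeomorph.measurableEmbedding
    (fun ζ => ENNReal.ofReal (‖bKer ω a ζ‖ * ω ‖ζ‖)) unitDisc
  rw [← this, hpre]
  refine lintegral_congr fun ζ => ?_
  have e : starRingEnd ℂ a * (rotation c ζ) = -((‖a‖:ℝ) * ζ) := by
    rw [rotation_apply, hcv]
    have : starRingEnd ℂ a * a = (‖a‖:ℂ) ^ 2 := Complex.conj_mul' a
    field_simp
    linear_combination -ζ * this
  have e3 : bKer ω a (rotation c ζ) = kK ω (-((‖a‖:ℝ) * ζ)) := by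
    rw [← e]; rfl
  rw [e3, LinearIsometryEquiv.norm_map]

lemma part1 {ω : ℝ → ℝ} (h : IsRadialWeight ω) {a : ℂ} (ha : a ∈ unitDisc) (ha0 : a ≠ 0) :
    ENNReal.ofReal ((1 / ‖a‖) * Real.log (1 / (1 - ‖a‖))) ≤
        ∫⁻ ζ in unitDisc, ENNReal.ofReal (‖bKer ω a ζ‖ * ω ‖ζ‖) := by
  have h0 : 0 < ‖a‖ := norm_pos_iff.2 ha0
  have h1 : ‖a‖ < 1 := by simpa [unitDisc] using ha
  rw [rotate_eq ha0, polar_eq h h0 h1]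
  exact radial_bound h h0 h1

lemma part2 {ω : ℝ → ℝ} (h : IsRadialWeight ω) (C : ℝ) : ∃ a ∈ unitDisc,
    ENNReal.ofReal C < ∫⁻ ζ in unitDisc, ENNReal.ofReal (‖bKer ω a ζ‖ * ω ‖ζ‖) := by
  set M := max C 0 + 1 with hM
  have hMp : 0 < M := by positivity
  set x := 1 - Real.exp (-M) with hx
  have hx1 : x < 1 := by simp [hx, Real.exp_pos]
  have hx0 : 0 < x := by simp [hx, hMp]
  have hn : ‖(x:ℂ)‖ = x := by rw [Complex.norm_real, Real.norm_of_nonneg hx0.le]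
  have hmem : (x:ℂ) ∈ unitDisc := by simpa only [unitDisc, mem_ball_zero_iff, hn] using hx1
  refine ⟨x, hmem, lt_of_lt_of_le ?_ (part1 h hmem (by exact_mod_cast hx0.ne'))⟩
  rw [hn]
  have e : Real.log (1 / (1 - x)) = M := by
    rw [hx, sub_sub_cancel, one_div, ← Real.exp_neg, neg_neg, Real.log_exp]
  have : M ≤ 1 / x * M := by
    have : 1 ≤ 1 / x := by rw [le_div_iff₀ hx0]; linarith
    nlinarith
  rw [e]
  have : C < 1 / x * M := by
    have := le_max_left C 0
    linarith
  exact (ENNReal.ofReal_lt_ofReal_iff (by positivity)).2 this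

lemma part3 {ω : ℝ → ℝ} (h : IsRadialWeight ω) : ¬ ProjBddH ω (fun _ => 1) := by
  rintro ⟨C, hC, H⟩
  obtain ⟨a, ha, hlt⟩ := part2 h (Real.pi * C)
  have ha1 : ‖a‖ < 1 := by simpa [unitDisc] using ha
  have hmD : MeasurableSet unitDisc := Metric.isOpen_ball.measurableSet
  have hbc : ContinuousOn (bKer ω a) unitDisc := by
    refine (kK_contOn h).comp (f := fun ζ => starRingEnd ℂ a * ζ) (by fun_prop) ?_
    intro z hz
    have hz1 : ‖z‖ < 1 := by simpa [unitDisc] using hz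
    simp only [unitDisc, mem_ball_zero_iff, norm_mul, RCLike.norm_conj]
    nlinarith [norm_nonneg a, norm_nonneg z]
  have hbm : AEMeasurable (bKer ω a) (volume.restrict unitDisc) := hbc.aemeasurable hmD
  set f : ℂ → ℂ := fun ζ => bKer ω a ζ / (‖bKer ω a ζ‖ : ℂ) with hf
  have hfm : AEStronglyMeasurable f (volume.restrict unitDisc) := by
    have : AEMeasurable f (volume.restrict unitDisc) :=
      hbm.div (Complex.measurable_ofReal.comp_aemeasurable hbm.norm)
    exact this.aestronglyMeasurable
  have hf1 : wSup (fun _ => 1) f ≤ 1 := by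
    refine essSup_le_of_ae_le _ (Filter.Eventually.of_forall fun z => ?_)
    simp only [mul_one, hf]
    rw [norm_div, Complex.norm_real, norm_norm]
    exact ENNReal.ofReal_le_one.2 (div_self_le_one _)
  obtain ⟨hint, hdiff, hle⟩ := H f hfm (hf1.trans_lt ENNReal.one_lt_top)
  have hle' : wSup (fun _ => 1) (bProj ω f) ≤ ENNReal.ofReal C :=
    hle.trans (by simpa using mul_le_mul_right hf1 (ENNReal.ofReal C))
  -- pointwise bound
  have hpt : ‖bProj ω f a‖ ≤ C := by
    have hae : (fun z => max ‖bProj ω f z‖ C) =ᵐ[volume.restrict unitDisc] fun _ => C := by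
      filter_upwards [ENNReal.ae_le_essSup (μ := volume.restrict unitDisc)
        (fun z => ENNReal.ofReal (‖bProj ω f z‖ * (fun _ => (1:ℝ)) ‖z‖))] with z hz
      have := hz.trans hle'
      rw [mul_one, ENNReal.ofReal_le_ofReal_iff hC.le] at this
      exact max_eq_right this
    have := Measure.eqOn_open_of_ae_eq hae Metric.isOpen_ball
      (ContinuousOn.sup hdiff.continuousOn.norm continuousOn_const) continuousOn_const ha
    exact max_eq_right_iff.1 this
  -- evaluate
  have hev : ∀ ζ, bInt ω f a ζ = ((‖bKer ω a ζ‖ * ω ‖ζ‖ : ℝ) : ℂ) := by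
    intro ζ
    simp only [bInt, hf]
    have e : bKer ω a ζ / (‖bKer ω a ζ‖:ℂ) * starRingEnd ℂ (bKer ω a ζ) = (‖bKer ω a ζ‖:ℂ) := by
      rw [div_mul_eq_mul_div, Complex.mul_conj']
      by_cases h0 : (‖bKer ω a ζ‖:ℂ) = 0
      · simp [h0]
      · field_simp
    rw [e]; push_cast; rfl
  have hi : IntegrableOn (fun ζ => ‖bKer ω a ζ‖ * ω ‖ζ‖) unitDisc := by
    have := (hint a ha).re
    refine this.congr (Filter.Eventually.of_forall fun ζ => ?_)
    simp [hev]
  have hnn : 0 ≤ᵐ[volume.restrict unitDisc] fun ζ => ‖bKer ω a ζ‖ * ω ‖ζ‖ := by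
    filter_upwards [self_mem_ae_restrict hmD] with z hz
    have hz1 : ‖z‖ < 1 := by simpa [unitDisc] using hz
    exact mul_nonneg (norm_nonneg _) (h.1 _ ⟨norm_nonneg _, hz1⟩)
  rw [← ofReal_integral_eq_lintegral_ofReal hi hnn] at hlt
  have hlt' := (ENNReal.ofReal_lt_ofReal_iff_of_nonneg (by have := Real.pi_pos; positivity)).1 hlt
  have hP : bProj ω f a = ((Real.pi⁻¹ * ∫ ζ in unitDisc, ‖bKer ω a ζ‖ * ω ‖ζ‖ : ℝ) : ℂ) := by
    rw [bProj]
    simp_rw [hev]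
    rw [integral_complex_ofReal]
    push_cast; rfl
  rw [hP, Complex.norm_real] at hpt
  have := (le_abs_self _).trans hpt
  rw [inv_mul_le_iff₀ Real.pi_pos] at this
  linarith

/-- There is an absolute constant `c > 0` so that, for every radial weight `ω`
and `a ∈ 𝔻 \ {0}`, `∫_𝔻 |B^ω_a| ω dA ≥ (c/|a|) log(1/(1-|a|))`; in particular
the supremum over `a` is infinite and `P_ω` is never bounded from `L^∞`
to `H^∞`. -/
theorem stmt13 :
    (∃ c : ℝ, 0 < c ∧ ∀ ω : ℝ → ℝ, IsRadialWeight ω → ∀ a ∈ unitDisc, a ≠ 0 →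
      ENNReal.ofReal ((c / ‖a‖) * Real.log (1 / (1 - ‖a‖))) ≤
        ∫⁻ ζ in unitDisc, ENNReal.ofReal (‖bKer ω a ζ‖ * ω ‖ζ‖)) ∧
    (∀ ω : ℝ → ℝ, IsRadialWeight ω →
      (⨆ a ∈ unitDisc,
        ∫⁻ ζ in unitDisc, ENNReal.ofReal (‖bKer ω a ζ‖ * ω ‖ζ‖)) = ⊤) ∧
    (∀ ω : ℝ → ℝ, IsRadialWeight ω → ¬ ProjBddH ω (fun _ => 1)) := by
  refine ⟨⟨1, one_pos, fun ω h a ha ha0 => part1 h ha ha0⟩, fun ω h => ?_, fun ω h => part3 h⟩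
  refine ENNReal.eq_top_of_forall_nnreal_le fun r => ?_
  obtain ⟨a, ha, hlt⟩ := part2 h r
  rw [ENNReal.ofReal_coe_nnreal] at hlt
  exact hlt.le.trans (le_iSup₂ (f := fun a (_ : a ∈ unitDisc) =>
    ∫⁻ ζ in unitDisc, ENNReal.ofReal (‖bKer ω a ζ‖ * ω ‖ζ‖)) a ha)
end
end

section
/- Let ν be a radial weight and let ω be a radial weight in D̂ such that P_ω : L^∞_ν̂ → H^∞_ν̂ is bounded. Then ν ∈ Ď. -/
open MeasureTheory Set Complex
open scoped ENNReal

noncomputable section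

/-! ### Basic facts on radial weights -/

lemma rw_intOn {ω : ℝ → ℝ} (h : IsRadialWeight ω) : IntegrableOn ω (Icc (0:ℝ) 1) :=
  (integrableOn_Icc_iff_integrableOn_Ico (by finiteness)).2 h.2.1

lemma rw_ii {ω : ℝ → ℝ} (h : IsRadialWeight ω) {a b : ℝ} (ha : 0 ≤ a) (hab : a ≤ b)
    (hb : b ≤ 1) : IntervalIntegrable ω volume a b :=
  (intervalIntegrable_iff_integrableOn_Icc_of_le hab).2
    ((rw_intOn h).mono_set (Icc_subset_Icc ha hb))

lemma rw_ii_pow {ω : ℝ → ℝ} (h : IsRadialWeight ω) (k : ℕ) {a b : ℝ} (ha : 0 ≤ a) (hab : a ≤ b)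
    (hb : b ≤ 1) : IntervalIntegrable (fun s => s ^ k * ω s) volume a b :=
  (rw_ii h ha hab hb).continuousOn_mul (by fun_prop)

lemma tl_anti {ω : ℝ → ℝ} (h : IsRadialWeight ω) {a b : ℝ} (ha : 0 ≤ a) (hab : a ≤ b)
    (hb : b < 1) : tl ω b ≤ tl ω a := by
  unfold tl
  rw [← intervalIntegral.integral_add_adjacent_intervals (rw_ii h ha hab hb.le)
    (rw_ii h (ha.trans hab) hb.le le_rfl)]
  have : 0 ≤ ∫ s in a..b, ω s :=
    intervalIntegral.integral_nonneg hab fun u hu => h.1 u ⟨ha.trans hu.1, hu.2.trans_lt hb⟩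
  linarith

lemma tl_cont {ω : ℝ → ℝ} (h : IsRadialWeight ω) : ContinuousOn (tl ω) (Icc (0:ℝ) 1) := by
  have := intervalIntegral.continuousOn_primitive_interval_left (f := ω) (μ := volume)
    (a := 0) (b := 1) (by rw [uIcc_of_le zero_le_one]; exact rw_intOn h)
  rwa [uIcc_of_le zero_le_one] at this

/-- The natural-exponent moment over `[t,1]`. -/
def pm (ω : ℝ → ℝ) (t : ℝ) (k : ℕ) : ℝ := ∫ s in t..1, s ^ k * ω s

lemma mom_eq (ω : ℝ → ℝ) (n : ℕ) : mom ω (2 * (n:ℝ) + 1) = pm ω 0 (2 * n + 1) := by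
  unfold mom pm
  congr 1
  ext s
  rw [← Real.rpow_natCast]
  push_cast
  rfl

lemma pm_ge {ω : ℝ → ℝ} (h : IsRadialWeight ω) {a t : ℝ} (k : ℕ) (ha : 0 ≤ a) (hat : a ≤ t)
    (ht : t < 1) : t ^ k * tl ω t ≤ pm ω a k := by
  unfold pm tl
  rw [← intervalIntegral.integral_add_adjacent_intervals (rw_ii_pow h k ha hat ht.le)
    (rw_ii_pow h k (ha.trans hat) ht.le le_rfl)]
  have h0 : 0 ≤ ∫ s in a..t, s ^ k * ω s :=
    intervalIntegral.integral_nonneg hat fun u hu =>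
      mul_nonneg (pow_nonneg (ha.trans hu.1) _) (h.1 u ⟨ha.trans hu.1, hu.2.trans_lt ht⟩)
  have h1 : t ^ k * ∫ s in t..1, ω s ≤ ∫ s in t..1, s ^ k * ω s := by
    rw [← intervalIntegral.integral_const_mul]
    refine intervalIntegral.integral_mono_on_of_le_Ioo ht.le
      ((rw_ii h (ha.trans hat) ht.le le_rfl).const_mul _)
      (rw_ii_pow h k (ha.trans hat) ht.le le_rfl) fun x hx => ?_
    have hx0 : 0 ≤ x := (ha.trans hat).trans hx.1.le
    exact mul_le_mul_of_nonneg_right (pow_le_pow_left₀ (ha.trans hat) hx.1.le _)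
      (h.1 x ⟨hx0, hx.2⟩)
  linarith

lemma pm_pos {ω : ℝ → ℝ} (h : IsRadialWeight ω) (k : ℕ) : 0 < pm ω 0 k := by
  have := pm_ge h (a := 0) (t := 1/2) k le_rfl (by norm_num) (by norm_num)
  have h2 := h.2.2 (1/2) ⟨by norm_num, by norm_num⟩
  exact lt_of_lt_of_le (by positivity) this

/-- The dyadic points `1 - 2^{-j}`. -/
def dy (j : ℕ) : ℝ := 1 - (1/2:ℝ) ^ j

lemma dy_nonneg (j : ℕ) : 0 ≤ dy j := by
  unfold dy
  have : (1/2:ℝ)^j ≤ 1 := pow_le_one₀ (by norm_num) (by norm_num)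
  linarith

lemma dy_lt (j : ℕ) : dy j < 1 := by
  unfold dy
  have : (0:ℝ) < (1/2:ℝ)^j := by positivity
  linarith

lemma dy_mono : Monotone dy := by
  intro a b hab
  unfold dy
  have : (1/2:ℝ)^b ≤ (1/2)^a := pow_le_pow_of_le_one (by norm_num) (by norm_num) hab
  linarith

lemma dy_zero : dy 0 = 0 := by simp [dy]

lemma dy_pow (j : ℕ) : (1/4:ℝ) ≤ dy (j+1) ^ (2^(j+1)) := by
  induction j with
  | zero => norm_num [dy]
  | succ j ih =>
    refine ih.trans ?_
    rw [pow_succ 2 (j+1), mul_comm, pow_mul]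
    refine pow_le_pow_left₀ (dy_nonneg _) ?_ _
    unfold dy
    rw [pow_succ (1/2:ℝ) (j+1)]
    nlinarith [sq_nonneg ((1/2:ℝ)^(j+1))]

lemma tl_dy_le {ω : ℝ → ℝ} {C : ℝ} (hC0 : 0 ≤ C)
    (hC : ∀ r ∈ Ico (0:ℝ) 1, tl ω r ≤ C * tl ω ((1 + r) / 2)) (i k : ℕ) :
    tl ω (dy i) ≤ C ^ k * tl ω (dy (i + k)) := by
  induction k with
  | zero => simp
  | succ k ih =>
    have h1 := hC (dy (i+k)) ⟨dy_nonneg _, dy_lt _⟩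
    have h2 : (1 + dy (i+k)) / 2 = dy (i + (k+1)) := by
      unfold dy; rw [← add_assoc, pow_succ]; ring
    rw [h2] at h1
    calc _ ≤ _ := ih
      _ ≤ C^k * (C * tl ω (dy (i + (k+1)))) := by gcongr
      _ = _ := by ring

/-- Upper estimate of moments by tails for weights in the upper doubling class. -/
lemma pm_le {ω : ℝ → ℝ} (h : IsRadialWeight ω) (hD : Dhat ω) :
    ∃ S : ℝ, 0 < S ∧ ∀ J x : ℕ, 2 ^ J ≤ x → pm ω 0 x ≤ S * tl ω (dy J) := by
  obtain ⟨C0, hC0⟩ := hD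
  obtain ⟨C, hC0', hC1⟩ : ∃ C, C0 ≤ C ∧ 1 ≤ C := ⟨max C0 1, le_max_left _ _, le_max_right _ _⟩
  have hC : ∀ r ∈ Ico (0:ℝ) 1, tl ω r ≤ C * tl ω ((1 + r) / 2) := by
    intro r hr
    have := h.2.2 ((1+r)/2) ⟨by linarith [hr.1], by linarith [hr.2]⟩
    exact (hC0 r hr).trans (by gcongr)
  have hCp : 0 ≤ C := by linarith
  obtain ⟨m, hm⟩ : ∃ m : ℕ, 2 * C ≤ 2 ^ m := by
    obtain ⟨m, hm⟩ := pow_unbounded_of_one_lt (2*C) (one_lt_two : (1:ℝ) < 2)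
    exact ⟨m, hm.le⟩
  -- bound of each dyadic contribution
  have key : ∀ k : ℕ, Real.exp (-(2:ℝ)^k) * C ^ (k+1) ≤ m.factorial * C * (1/2)^k := by
    intro k
    have e1 : ((2:ℝ)^k)^m / m.factorial ≤ Real.exp ((2:ℝ)^k) :=
      Real.pow_div_factorial_le_exp _ (by positivity) m
    have hf : (0:ℝ) < m.factorial := by positivity
    rw [div_le_iff₀ hf] at e1
    have e2 : (2*C)^k ≤ ((2:ℝ)^k)^m := by
      rw [← pow_mul, mul_comm k m, pow_mul]
      exact pow_le_pow_left₀ (by positivity) hm k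
    have e3 : (2*C)^k ≤ Real.exp ((2:ℝ)^k) * m.factorial := e2.trans e1
    rw [Real.exp_neg, inv_mul_le_iff₀ (Real.exp_pos _)]
    have e4 : C^(k+1) = C * (1/2)^k * (2*C)^k := by
      rw [mul_pow, pow_succ, div_pow, one_pow]; field_simp
    rw [e4]
    calc _ ≤ C * (1/2)^k * (Real.exp ((2:ℝ)^k) * m.factorial) := by gcongr
      _ = _ := by ring
  refine ⟨1 + m.factorial * C * 2, by positivity, fun J x hx => ?_⟩
  have hT := h.2.2 (dy J) ⟨dy_nonneg _, dy_lt _⟩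
  have main : ∀ k ≤ J, pm ω (dy (J - k)) x ≤
      (1 + ∑ i ∈ Finset.range k, m.factorial * C * (1/2:ℝ)^i) * tl ω (dy J) := by
    intro k
    induction k with
    | zero =>
      intro _
      simp only [Nat.sub_zero, Finset.range_zero, Finset.sum_empty, add_zero, one_mul]
      unfold pm tl
      refine intervalIntegral.integral_mono_on_of_le_Ioo (dy_lt _).le
        (rw_ii_pow h x (dy_nonneg _) (dy_lt _).le le_rfl)
        (rw_ii h (dy_nonneg _) (dy_lt _).le le_rfl) fun s hs => ?_
      have hs0 : 0 ≤ s := (dy_nonneg _).trans hs.1.le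
      exact mul_le_of_le_one_left (h.1 s ⟨hs0, hs.2⟩) (pow_le_one₀ hs0 hs.2.le)
    | succ k ih =>
      intro hk
      have ih' := ih (by omega)
      set a := dy (J - (k+1)) with ha
      set b := dy (J - k) with hbdef
      have hab : a ≤ b := dy_mono (by omega)
      have ha0 : 0 ≤ a := dy_nonneg _
      have hb0 : 0 ≤ b := dy_nonneg _
      have hb1 : b < 1 := dy_lt _
      have ha1 : a < 1 := dy_lt _
      have hsplit : pm ω a x = (∫ s in a..b, s ^ x * ω s) + pm ω b x :=
        (intervalIntegral.integral_add_adjacent_intervals (rw_ii_pow h x ha0 hab hb1.le)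
          (rw_ii_pow h x hb0 hb1.le le_rfl)).symm
      have hI : ∫ s in a..b, s ^ x * ω s ≤ b ^ x * tl ω a := by
        have i1 : ∫ s in a..b, s ^ x * ω s ≤ ∫ s in a..b, b ^ x * ω s := by
          refine intervalIntegral.integral_mono_on hab (rw_ii_pow h x ha0 hab hb1.le)
            ((rw_ii h ha0 hab hb1.le).const_mul _) fun s hs => ?_
          have hs0 : 0 ≤ s := ha0.trans hs.1
          exact mul_le_mul_of_nonneg_right (pow_le_pow_left₀ hs0 hs.2 _)
            (h.1 s ⟨hs0, hs.2.trans_lt hb1⟩)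
        rw [intervalIntegral.integral_const_mul] at i1
        refine i1.trans (mul_le_mul_of_nonneg_left ?_ (by positivity))
        have : tl ω a = (∫ s in a..b, ω s) + tl ω b :=
          (intervalIntegral.integral_add_adjacent_intervals (rw_ii h ha0 hab hb1.le)
            (rw_ii h hb0 hb1.le le_rfl)).symm
        have h3 := h.2.2 b ⟨hb0, hb1⟩
        linarith
      have hTa : tl ω a ≤ C^(k+1) * tl ω (dy J) := by
        have := tl_dy_le hCp hC (J - (k+1)) (k+1)
        rwa [Nat.sub_add_cancel hk] at this
      have hbx : b ^ x ≤ Real.exp (-(2:ℝ)^k) := by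
        have hbe : b ≤ Real.exp (-((1/2:ℝ)^(J-k))) := by
          have := Real.add_one_le_exp (-((1/2:ℝ)^(J-k)))
          rw [hbdef]; unfold dy; linarith
        calc b ^ x ≤ (Real.exp (-((1/2:ℝ)^(J-k)))) ^ x := pow_le_pow_left₀ hb0 hbe _
          _ = Real.exp (-(x * (1/2:ℝ)^(J-k))) := by
            rw [← Real.exp_nat_mul]; congr 1; ring
          _ ≤ _ := by
            rw [Real.exp_le_exp, neg_le_neg_iff]
            have hx' : (2:ℝ)^J ≤ x := by exact_mod_cast hx
            calc (2:ℝ)^k = 2^J * (1/2:ℝ)^(J-k) := by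
                  obtain ⟨d, rfl⟩ : ∃ d, J = k + d := ⟨J - k, by omega⟩
                  rw [Nat.add_sub_cancel_left, pow_add, div_pow, one_pow]
                  field_simp
              _ ≤ _ := by gcongr
      have hbT : b ^ x * tl ω a ≤ m.factorial * C * (1/2)^k * tl ω (dy J) := by
        calc _ ≤ Real.exp (-(2:ℝ)^k) * (C^(k+1) * tl ω (dy J)) := by
              have := h.2.2 a ⟨ha0, ha1⟩
              gcongr
          _ = Real.exp (-(2:ℝ)^k) * C^(k+1) * tl ω (dy J) := by ring
          _ ≤ _ := by
              have := key k
              gcongr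
      rw [hsplit, Finset.sum_range_succ]
      nlinarith
  have := main J le_rfl
  rw [Nat.sub_self, dy_zero] at this
  refine this.trans ?_
  gcongr
  rw [← Finset.mul_sum]
  gcongr
  have := sum_geometric_two_le J
  simpa using this

/-! ### Polar coordinates and the Fourier coefficients of the argument -/

lemma polar_int (g h : ℝ → ℂ) :
    ∫ ζ in unitDisc, g ‖ζ‖ * h (arg ζ) =
      (∫ s in Ioo (0:ℝ) 1, (s:ℂ) * g s) * ∫ θ in Ioo (-Real.pi) Real.pi, h θ := by
  have hm : MeasurableSet unitDisc := Metric.isOpen_ball.measurableSet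
  rw [← integral_indicator hm, ← Complex.integral_comp_polarCoord_symm,
    ← setIntegral_prod_mul]
  have hE : ∫ (p : ℝ × ℝ) in polarCoord.target, p.1 • unitDisc.indicator
      (fun ζ => g ‖ζ‖ * h (arg ζ)) (Complex.polarCoord.symm p) =
      ∫ (p : ℝ × ℝ) in polarCoord.target, (Ioo (0:ℝ) 1 ×ˢ Ioo (-Real.pi) Real.pi).indicator
        (fun p => (p.1:ℂ) * g p.1 * h p.2) p := by
    refine setIntegral_congr_fun polarCoord.open_target.measurableSet fun p hp => ?_
    have hp' := hp
    rw [polarCoord_target, mem_prod] at hp'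
    have h1 : (0:ℝ) < p.1 := hp'.1
    have hn : ‖Complex.polarCoord.symm p‖ = p.1 := by
      rw [Complex.norm_polarCoord_symm, abs_of_pos h1]
    have ha : arg (Complex.polarCoord.symm p) = p.2 := by
      rw [Complex.polarCoord_symm_apply]
      have := Complex.arg_mul_cos_add_sin_mul_I (r := p.1) (θ := p.2) h1
        ⟨hp'.2.1, hp'.2.2.le⟩
      convert this using 3
      simp
    by_cases hlt : p.1 < 1
    · rw [indicator_of_mem (by simpa [unitDisc, abs_of_pos h1] using hlt),
        indicator_of_mem (show p ∈ Ioo (0:ℝ) 1 ×ˢ Ioo (-Real.pi) Real.pi from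
          ⟨⟨h1, hlt⟩, hp'.2⟩), hn, ha]
      simp [mul_assoc]
    · rw [indicator_of_notMem (by simpa [unitDisc, abs_of_pos h1] using hlt),
        indicator_of_notMem (fun hh => hlt hh.1.2)]
      simp
  rw [hE, setIntegral_indicator (measurableSet_Ioo.prod measurableSet_Ioo)]
  have hs : polarCoord.target ∩ (Ioo (0:ℝ) 1 ×ˢ Ioo (-Real.pi) Real.pi) =
      Ioo (0:ℝ) 1 ×ˢ Ioo (-Real.pi) Real.pi := by
    apply inter_eq_right.2
    rw [polarCoord_target]
    exact prod_mono (fun x hx => hx.1) subset_rfl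
  rw [hs]
  rfl

lemma fourier_arg (n : ℕ) :
    ∫ θ in Ioo (-Real.pi) Real.pi, I * (θ:ℂ) * cexp (-(n * θ * I)) =
      -(2 * Real.pi * (-1)^n / n) := by
  have hpi : -Real.pi ≤ Real.pi := by linarith [Real.pi_pos]
  rw [← integral_Ioc_eq_integral_Ioo, ← intervalIntegral.integral_of_le hpi]
  rcases Nat.eq_zero_or_pos n with rfl | hn
  · simp only [CharP.cast_eq_zero, zero_mul, neg_zero, Complex.exp_zero, mul_one, div_zero]
    rw [intervalIntegral.integral_const_mul, intervalIntegral.integral_ofReal, integral_id]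
    simp
  · have hn' : (n:ℂ) ≠ 0 := by exact_mod_cast hn.ne'
    have hd : ∀ x ∈ uIcc (-Real.pi) Real.pi, HasDerivAt
        (fun θ : ℝ => -((θ:ℂ) * cexp (-(n * θ * I)) / n) + I * cexp (-(n * θ * I)) / n^2)
        (I * (x:ℂ) * cexp (-(n * x * I))) x := by
      intro x _
      have e0 : HasDerivAt (fun θ : ℝ => (θ:ℂ)) 1 x := by
        simpa using (hasDerivAt_id x).ofReal_comp
      have e1 : HasDerivAt (fun θ : ℝ => cexp (-(n * θ * I))) 
          (cexp (-(n * x * I)) * (-(n * 1 * I))) x :=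
        (((e0.const_mul (n:ℂ)).mul_const I).fun_neg).cexp
      have e2 := ((e0.fun_mul e1).div_const (n:ℂ)).fun_neg.fun_add
        ((e1.const_mul I).div_const ((n:ℂ)^2))
      refine e2.congr_deriv ?_
      generalize cexp (-(n * x * I)) = E
      have hI : I * I = -1 := I_mul_I
      have q1 : I * (E * (-(n * 1 * I))) / (n:ℂ)^2 = E / n := by
        rw [div_eq_div_iff (by positivity) hn']
        linear_combination (-(E * n^2)) * hI
      rw [q1]
      have q2 : (1 * E + (x:ℂ) * (E * -(n * 1 * I))) / n = E / n - x * E * I := by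
        rw [eq_sub_iff_add_eq, ← mul_div_cancel_right₀ (x * E * I : ℂ) hn', ← add_div]
        congr 1
        ring
      rw [q2]
      ring
    rw [intervalIntegral.integral_eq_sub_of_hasDerivAt hd
      (Continuous.intervalIntegrable (by fun_prop) _ _)]
    have p1 : cexp (n * Real.pi * I) = (-1)^n := by
      rw [mul_assoc, Complex.exp_nat_mul, Complex.exp_pi_mul_I]
    have p2 : cexp (-(n * Real.pi * I)) = (-1)^n := by
      rw [Complex.exp_neg, p1, ← inv_pow]; norm_num
    have p3 : cexp (-(n * ((-Real.pi : ℝ):ℂ) * I)) = (-1)^n := by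
      rw [← p1]; congr 1; push_cast; ring
    rw [p2, p3]
    push_cast
    ring

/-! ### The test function -/

/-- The test function: `i arg ζ` on the annulus `ρ ≤ |ζ|`. -/
def tf (ρ : ℝ) (ζ : ℂ) : ℂ := (if ρ ≤ ‖ζ‖ then 1 else 0) * (I * (arg ζ : ℂ))

lemma tf_meas (ρ : ℝ) : Measurable (tf ρ) := by
  unfold tf
  refine Measurable.mul (Measurable.ite (measurableSet_le measurable_const measurable_norm)
    measurable_const measurable_const) ?_
  exact (Complex.measurable_ofReal.comp Complex.measurable_arg).const_mul _

lemma tf_norm {ν : ℝ → ℝ} (hν : IsRadialWeight ν) {ρ : ℝ} (h0 : 0 ≤ ρ) (h1 : ρ < 1) {ζ : ℂ}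
    (hζ : ζ ∈ unitDisc) : ‖tf ρ ζ‖ * tl ν ‖ζ‖ ≤ Real.pi * tl ν ρ := by
  have hz : ‖ζ‖ < 1 := by simpa [unitDisc] using hζ
  have hT := hν.2.2 ρ ⟨h0, h1⟩
  have hpi := Real.pi_pos
  unfold tf
  split_ifs with h
  · have := tl_anti hν h0 h hz
    have h3 := hν.2.2 ‖ζ‖ ⟨norm_nonneg _, hz⟩
    have h4 := Complex.abs_arg_le_pi ζ
    simp only [one_mul, norm_mul, norm_I, norm_real, Real.norm_eq_abs]
    gcongr
  · simp; positivity

lemma tf_wSup {ν : ℝ → ℝ} (hν : IsRadialWeight ν) {ρ : ℝ} (h0 : 0 ≤ ρ) (h1 : ρ < 1) :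
    wSup (tl ν) (tf ρ) ≤ ENNReal.ofReal (Real.pi * tl ν ρ) := by
  have hm : MeasurableSet unitDisc := Metric.isOpen_ball.measurableSet
  refine essSup_le_of_ae_le _ ?_
  filter_upwards [ae_restrict_mem hm] with ζ hζ
  exact ENNReal.ofReal_le_ofReal (tf_norm hν h0 h1 hζ)

lemma wSup_pointwise {ν : ℝ → ℝ} (hν : IsRadialWeight ν) {g : ℂ → ℂ}
    (hg : ContinuousOn g unitDisc) {D : ℝ} (hD : 0 ≤ D)
    (h : wSup (tl ν) g ≤ ENNReal.ofReal D) {z : ℂ} (hz : z ∈ unitDisc) :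
    ‖g z‖ * tl ν ‖z‖ ≤ D := by
  have ho : IsOpen unitDisc := Metric.isOpen_ball
  have hae : ∀ᵐ w ∂(volume.restrict unitDisc), ‖g w‖ * tl ν ‖w‖ ≤ D := by
    filter_upwards [ae_le_essSup (f := fun z => ENNReal.ofReal (‖g z‖ * tl ν ‖z‖))
      (μ := volume.restrict unitDisc)] with w hw
    exact (ENNReal.ofReal_le_ofReal_iff hD).1 (hw.trans h)
  have hc : ContinuousOn (fun w => ‖g w‖ * tl ν ‖w‖) unitDisc := by
    refine hg.norm.mul ((tl_cont hν).comp continuous_norm.continuousOn fun w hw => ?_)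
    have : ‖w‖ < 1 := by simpa [unitDisc] using hw
    exact ⟨norm_nonneg _, this.le⟩
  by_contra hlt
  push Not at hlt
  have hU : IsOpen (unitDisc ∩ (fun w => ‖g w‖ * tl ν ‖w‖) ⁻¹' Ioi D) :=
    hc.isOpen_inter_preimage ho isOpen_Ioi
  have hpos := hU.measure_pos volume ⟨z, hz, hlt⟩
  rw [ae_restrict_iff' ho.measurableSet] at hae
  refine hpos.ne' (measure_mono_null ?_ hae)
  intro w hw hw'
  exact absurd (hw' hw.1) (not_le.2 hw.2)

lemma tf_mul_pow (ω : ℝ → ℝ) (ρ : ℝ) (n : ℕ) (ζ : ℂ) :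
    tf ρ ζ * (ω ‖ζ‖ : ℂ) * (starRingEnd ℂ ζ)^n =
      (fun s : ℝ => (if ρ ≤ s then 1 else 0) * (ω s : ℂ) * (s:ℂ)^n) ‖ζ‖ *
      (fun θ : ℝ => I * (θ:ℂ) * cexp (-(n * θ * I))) (arg ζ) := by
  have h : starRingEnd ℂ ζ = (‖ζ‖:ℂ) * cexp (-(arg ζ * I)) := by
    conv_lhs => rw [← Complex.norm_mul_exp_arg_mul_I ζ]
    rw [map_mul, Complex.conj_ofReal, ← Complex.exp_conj]
    simp
  rw [h, mul_pow, ← Complex.exp_nat_mul]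
  unfold tf
  simp only
  rw [show (n:ℂ) * -(arg ζ * I) = -(n * arg ζ * I) by ring]
  ring

lemma tf_coeff {ω : ℝ → ℝ} {ρ : ℝ} (h0 : 0 ≤ ρ) (h1 : ρ < 1) (n : ℕ) :
    ∫ ζ in unitDisc, tf ρ ζ * (ω ‖ζ‖ : ℂ) * (starRingEnd ℂ ζ)^n =
      (pm ω ρ (n+1) : ℂ) * -(2 * Real.pi * (-1)^n / n) := by
  rw [integral_congr_ae (Filter.Eventually.of_forall fun ζ => tf_mul_pow ω ρ n ζ)]
  refine (polar_int (fun s : ℝ => (if ρ ≤ s then 1 else 0) * (ω s : ℂ) * (s:ℂ)^n)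
    (fun θ : ℝ => I * (θ:ℂ) * cexp (-(n * θ * I)))).trans ?_
  rw [fourier_arg]
  congr 1
  have e : ∀ s : ℝ, (s:ℂ) * ((if ρ ≤ s then 1 else 0) * (ω s : ℂ) * (s:ℂ)^n) =
      (Ici ρ).indicator (fun s => ((s^(n+1) * ω s : ℝ) : ℂ)) s := by
    intro s
    by_cases hs : ρ ≤ s
    · rw [indicator_of_mem (by exact hs), if_pos hs]; push_cast; ring
    · rw [indicator_of_notMem (by exact hs), if_neg hs]; simp
  simp_rw [e]
  rw [setIntegral_indicator measurableSet_Ici]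
  refine (integral_ofReal (𝕜 := ℂ) (f := fun s : ℝ => s^(n+1) * ω s)).trans ?_
  unfold pm
  rw [intervalIntegral.integral_of_le h1.le, integral_Ioc_eq_integral_Ioo]
  congr 1
  refine setIntegral_congr_set ?_
  have e1 : (Ioo (0:ℝ) 1 ∩ Ici ρ : Set ℝ) =ᵐ[volume] (Ioo (0:ℝ) 1 ∩ Ioi ρ : Set ℝ) :=
    (Filter.EventuallyEq.refl _ _).inter Ioi_ae_eq_Ici.symm
  refine e1.trans (Filter.EventuallyEq.of_eq ?_)
  ext s
  change s ∈ Ioo (0:ℝ) 1 ∩ Ioi ρ ↔ s ∈ Ioo ρ 1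
  simp only [mem_inter_iff, mem_Ioo, mem_Ioi]
  constructor
  · rintro ⟨⟨_, h⟩, h'⟩; exact ⟨h', h⟩
  · rintro ⟨h', h⟩; exact ⟨⟨by linarith, h⟩, h'⟩

lemma summ_ker {ω : ℝ → ℝ} (h : IsRadialWeight ω) {r : ℝ} (h0 : 0 ≤ r) (h1 : r < 1) :
    Summable fun n : ℕ => r ^ n / (2 * pm ω 0 (2*n+1)) := by
  set t := (1+r)/2 with ht
  have ht0 : 0 < t := by rw [ht]; linarith
  have ht1 : t < 1 := by rw [ht]; linarith
  have hT := h.2.2 t ⟨ht0.le, ht1⟩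
  have hlt : r / t^2 < 1 := by
    rw [div_lt_one (by positivity), ht]; nlinarith [sq_pos_of_pos (sub_pos.2 h1)]
  refine Summable.of_nonneg_of_le (fun n => ?_) (fun n => ?_)
    ((summable_geometric_of_lt_one (by positivity) hlt).mul_left (1 / (2 * (t * tl ω t))))
  · have := pm_pos h (2*n+1)
    positivity
  · have := pm_ge h (2*n+1) le_rfl ht0.le ht1
    calc r ^ n / (2 * pm ω 0 (2*n+1)) ≤ r ^ n / (2 * (t^(2*n+1) * tl ω t)) := by gcongr
      _ = _ := by
        clear_value t
        rw [div_pow, pow_succ, pow_mul]; field_simp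

lemma proj_hasSum {ω : ℝ → ℝ} (h : IsRadialWeight ω) {ρ : ℝ} (h0 : 0 ≤ ρ) (h1 : ρ < 1)
    (hint : IntegrableOn (bInt ω (tf ρ) 0) unitDisc) {r : ℝ} (hr0 : 0 ≤ r) (hr1 : r < 1) :
    HasSum (fun n : ℕ => ((r ^ n * pm ω ρ (n+1) / (n * pm ω 0 (2*n+1)) : ℝ) : ℂ))
      (-bProj ω (tf ρ) (-(r:ℂ))) := by
  have hm : MeasurableSet unitDisc := Metric.isOpen_ball.measurableSet
  set G : ℂ → ℂ := fun ζ => tf ρ ζ * (ω ‖ζ‖ : ℂ) with hG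
  have hGi : IntegrableOn G unitDisc := by
    have e : bInt ω (tf ρ) 0 = fun ζ => ((1 / (2 * pm ω 0 1) : ℝ) : ℂ) * G ζ := by
      ext ζ
      unfold bInt bKer
      rw [tsum_eq_single 0 (by intro n hn; simp [hn])]
      have := mom_eq ω 0
      simp only [Nat.cast_zero, mul_zero, zero_add] at this
      rw [map_div₀, Complex.conj_ofReal]
      simp [this, hG]
      ring
    have hp := pm_pos h 1
    have := hint.const_mul ((2 * pm ω 0 1 : ℝ) : ℂ)
    rw [e] at this
    refine this.congr (Filter.Eventually.of_forall fun ζ => ?_)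
    simp only
    rw [← mul_assoc, ← Complex.ofReal_mul, mul_one_div_cancel (by positivity)]
    simp
  set c : ℕ → ℝ := fun n => 1 / (2 * pm ω 0 (2*n+1)) with hc
  have hcpos : ∀ n, 0 < c n := fun n => by
    have := pm_pos h (2*n+1)
    simp only [hc]; positivity
  set F : ℕ → ℂ → ℂ := fun n ζ => G ζ * (((-r)^n * c n : ℝ) * (starRingEnd ℂ ζ)^n) with hF
  have hFb : ∀ n, ∀ ζ ∈ unitDisc, ‖(((-r)^n * c n : ℝ) * (starRingEnd ℂ ζ)^n : ℂ)‖ ≤ r^n * c n := by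
    intro n ζ hζ
    have hz : ‖ζ‖ < 1 := by simpa [unitDisc] using hζ
    have hcn := hcpos n
    rw [norm_mul, norm_pow, RCLike.norm_conj, norm_real, norm_mul, norm_pow, norm_neg,
      Real.norm_of_nonneg hr0, Real.norm_of_nonneg hcn.le]
    exact mul_le_of_le_one_right (by positivity) (pow_le_one₀ (norm_nonneg _) hz.le)
  have hFi : ∀ n, Integrable (F n) (volume.restrict unitDisc) := by
    intro n
    refine hGi.mul_bdd (c := r^n * c n) (Continuous.aestronglyMeasurable (by fun_prop)) ?_
    filter_upwards [ae_restrict_mem hm] with ζ hζ using hFb n ζ hζ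
  have hsum : Summable fun n => ∫ ζ in unitDisc, ‖F n ζ‖ := by
    refine Summable.of_nonneg_of_le (fun n => integral_nonneg fun _ => norm_nonneg _) (fun n => ?_)
      ((summ_ker h hr0 hr1).mul_left (∫ ζ in unitDisc, ‖G ζ‖))
    rw [← integral_mul_const]
    refine integral_mono_ae (hFi n).norm (hGi.norm.mul_const _) ?_
    filter_upwards [ae_restrict_mem hm] with ζ hζ
    simp only [hF]
    rw [norm_mul]
    have := hFb n ζ hζ
    simp only [hc, mul_one_div] at this
    simp only [hc, mul_one_div]
    gcongr
  have hS := hasSum_integral_of_summable_integral_norm hFi hsum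
  have hint2 : ∫ ζ in unitDisc, ∑' n, F n ζ = ∫ ζ in unitDisc, bInt ω (tf ρ) (-(r:ℂ)) ζ := by
    congr 1
    ext ζ
    unfold bInt bKer
    simp only [hF, hG]
    rw [tsum_mul_left, Complex.conj_tsum]
    rw [mul_right_comm]
    congr 2
    refine tsum_congr fun n => ?_
    simp only [mom_eq, hc]
    rw [map_div₀, Complex.conj_ofReal, map_pow, map_mul, Complex.conj_conj]
    push_cast
    rw [mul_pow]
    ring
  rw [hint2] at hS
  have hS' := (hS.mul_left ((Real.pi:ℂ)⁻¹)).neg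
  unfold bProj
  refine (congrArg (fun u => HasSum u _) (funext fun n => ?_)).mpr hS'
  have hFn : ∫ ζ in unitDisc, F n ζ = (((-r)^n * c n : ℝ) : ℂ) *
      ((pm ω ρ (n+1) : ℂ) * -(2 * Real.pi * (-1)^n / n)) := by
    rw [← tf_coeff h0 h1 n, ← integral_const_mul]
    congr 1
    ext ζ
    simp only [hF, hG]
    ring
  rw [hFn]
  have hpi : (Real.pi:ℂ) ≠ 0 := by exact_mod_cast Real.pi_ne_zero
  have hsgn : ((-1:ℂ)^n) * (-1)^n = 1 := by rw [← mul_pow]; norm_num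
  have hrn : (((-r)^n * c n : ℝ) : ℂ) = (-1)^n * ((r:ℂ)^n * (c n : ℂ)) := by
    push_cast; rw [neg_pow]; ring
  rw [hrn]
  simp only [hc]
  push_cast
  calc _ = ((-1:ℂ)^n * (-1)^n) * ((r:ℂ)^n * pm ω ρ (n+1) / (n * pm ω 0 (2*n+1))) := by
        rw [hsgn, one_mul]
    _ = ((Real.pi:ℂ)⁻¹ * Real.pi) * (((-1:ℂ)^n * (-1)^n) *
          ((r:ℂ)^n * pm ω ρ (n+1) / (n * pm ω 0 (2*n+1)))) := by
        rw [inv_mul_cancel₀ hpi, one_mul]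
    _ = _ := by ring

lemma sum_block (f : ℕ → ℝ) (e : ℝ) (a L : ℕ)
    (hf : ∀ j < L, ∀ n ∈ Finset.Ico (2^(a+j)) (2^(a+j+1)), e / 2^(a+j) ≤ f n) :
    L * e ≤ ∑ n ∈ Finset.Ico (2^a) (2^(a+L)), f n := by
  induction L with
  | zero => simp
  | succ L ih =>
    have h1 := ih fun j hj => hf j (by omega)
    have h2 : e ≤ ∑ n ∈ Finset.Ico (2^(a+L)) (2^(a+L+1)), f n := by
      have := Finset.card_nsmul_le_sum _ f _ (hf L (by omega))
      rw [Nat.card_Ico, pow_succ, Nat.mul_two, Nat.add_sub_cancel, nsmul_eq_mul] at this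
      push_cast at this
      rwa [mul_div_cancel₀ _ (by positivity), ← Nat.mul_two, ← pow_succ] at this
    rw [← add_assoc, ← Finset.sum_Ico_consecutive f (n := 2^(a+L))
      (Nat.pow_le_pow_right (by norm_num) (by omega))
      (Nat.pow_le_pow_right (by norm_num) (by omega))]
    push_cast
    linarith

/-- Decay of the tails along dyadic points. -/
lemma dyadic_decay {ω ν : ℝ → ℝ} (hω : IsRadialWeight ω) (hν : IsRadialWeight ν)
    (hωD : Dhat ω) (hb : ProjBddH ω (tl ν)) :
    ∃ B : ℝ, ∀ a L : ℕ, (L:ℝ) * tl ν (dy (a+1+L)) ≤ B * tl ν (dy (a+1)) := by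
  obtain ⟨S, hS0, hS⟩ := pm_le hω hωD
  obtain ⟨C, hC0, hC⟩ := hb
  refine ⟨128 * S * (C * Real.pi), fun a L => ?_⟩
  rcases Nat.eq_zero_or_pos L with rfl | hL
  · have := hν.2.2 (dy (a+1)) ⟨dy_nonneg _, dy_lt _⟩
    have := Real.pi_pos
    simp; positivity
  set ρ := dy (a+1) with hρ
  set r := dy (a+1+L) with hr
  have hρ0 : 0 ≤ ρ := dy_nonneg _
  have hρ1 : ρ < 1 := dy_lt _
  have hr0 : 0 ≤ r := dy_nonneg _
  have hr1 : r < 1 := dy_lt _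
  have hTρ := hν.2.2 ρ ⟨hρ0, hρ1⟩
  have hTr := hν.2.2 r ⟨hr0, hr1⟩
  have hw := tf_wSup hν hρ0 hρ1
  obtain ⟨hi, hd, hbd⟩ := hC (tf ρ) (tf_meas ρ).aestronglyMeasurable
    (hw.trans_lt ENNReal.ofReal_lt_top)
  have hbd' : wSup (tl ν) (bProj ω (tf ρ)) ≤ ENNReal.ofReal (C * (Real.pi * tl ν ρ)) := by
    rw [ENNReal.ofReal_mul hC0.le]
    exact hbd.trans (by gcongr)
  have hz : (-(r:ℂ)) ∈ unitDisc := by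
    simp [unitDisc, abs_of_nonneg hr0, hr1]
  have hpi := Real.pi_pos
  have hpt := wSup_pointwise hν hd.continuousOn (by positivity) hbd' hz
  have hnr : ‖(-(r:ℂ))‖ = r := by simp [abs_of_nonneg hr0]
  rw [hnr] at hpt
  have hsum := proj_hasSum hω hρ0 hρ1 (hi 0 (by simp [unitDisc])) hr0 hr1
  set f : ℕ → ℝ := fun n => r ^ n * pm ω ρ (n+1) / (n * pm ω 0 (2*n+1)) with hf
  have hpmρ : ∀ k, 0 ≤ pm ω ρ k := fun k => by
    refine le_trans ?_ (pm_ge hω k hρ0 le_rfl hρ1)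
    have := hω.2.2 ρ ⟨hρ0, hρ1⟩
    positivity
  have hfn : ∀ n, 0 ≤ f n := fun n => by
    have := pm_pos hω (2*n+1)
    have := hpmρ (n+1)
    simp only [hf]; positivity
  have hre := Complex.hasSum_re hsum
  simp only [Complex.ofReal_re] at hre
  have hle := sum_le_hasSum (Finset.Ico (2^(a+1)) (2^(a+1+L))) (fun n _ => hfn n) hre
  have hnorm : (-bProj ω (tf ρ) (-(r:ℂ))).re ≤ ‖bProj ω (tf ρ) (-(r:ℂ))‖ := by
    rw [← norm_neg]; exact Complex.re_le_norm _
  have hblk := sum_block f (1/(128*S)) (a+1) L (by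
    intro j hj n hn
    rw [Finset.mem_Ico] at hn
    obtain ⟨hn1, hn2⟩ := hn
    set t := dy (a+1+j) with ht
    have ht0 : 0 ≤ t := dy_nonneg _
    have ht1 : t < 1 := dy_lt _
    have hTt := hω.2.2 t ⟨ht0, ht1⟩
    have hnpos : 0 < n := lt_of_lt_of_le (by positivity) hn1
    have hup : pm ω 0 (2*n+1) ≤ S * tl ω t := hS _ _ (by omega)
    have hlo : (1/16) * tl ω t ≤ pm ω ρ (n+1) := by
      refine le_trans ?_ (pm_ge hω (n+1) hρ0 (dy_mono (by omega) : ρ ≤ t) ht1)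
      refine mul_le_mul_of_nonneg_right ?_ hTt.le
      have h4 : (1/4:ℝ) ≤ t^(2^(a+1+j)) := by
        have := dy_pow (a+j)
        rwa [show a + j + 1 = a+1+j by omega] at this
      calc (1/16:ℝ) = (1/4)^2 := by norm_num
        _ ≤ (t^(2^(a+1+j)))^2 := by gcongr
        _ = t^(2^(a+1+j+1)) := by rw [← pow_mul, ← pow_succ]
        _ ≤ t^(n+1) := pow_le_pow_of_le_one ht0 ht1.le (by omega)
    have hrn : (1/4:ℝ) ≤ r^n := by
      have h4 : (1/4:ℝ) ≤ r^(2^(a+1+L)) := by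
        have := dy_pow (a+L)
        rwa [show a + L + 1 = a+1+L by omega] at this
      refine h4.trans (pow_le_pow_of_le_one hr0 hr1.le ?_)
      exact hn2.le.trans (Nat.pow_le_pow_right (by norm_num) (by omega))
    have hn2' : (n:ℝ) ≤ 2 * 2^(a+1+j) := by
      have : n ≤ 2 * 2^(a+1+j) := by rw [pow_succ] at hn2; omega
      exact_mod_cast this
    have hpp := pm_pos hω (2*n+1)
    have hnp : (0:ℝ) < n := by exact_mod_cast hnpos
    calc 1/(128*S) / 2^(a+1+j)
        = (1/4 * (1/16 * tl ω t)) / ((2 * 2^(a+1+j)) * (S * tl ω t)) := by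
          field_simp; norm_num
      _ ≤ f n := by
          have hq := hpmρ (n+1)
          simp only [hf]
          have hnum : 0 ≤ r ^ n * pm ω ρ (n+1) := by positivity
          gcongr)
  have h1 : (L:ℝ) * (1/(128*S)) * tl ν r ≤ C * (Real.pi * tl ν ρ) := by
    refine le_trans ?_ hpt
    gcongr
    linarith
  have h2 : (L:ℝ) * tl ν r = 128 * S * ((L:ℝ) * (1/(128*S)) * tl ν r) := by
    field_simp
  rw [h2]
  calc _ ≤ 128 * S * (C * (Real.pi * tl ν ρ)) := by gcongr
    _ = _ := by ring

/-- Proposition 4.2: if `ω ∈ D̂` and `P_ω : L^∞_ν̂ → H^∞_ν̂` is bounded,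
then `ν ∈ Ď`. -/
theorem stmt16 (ω ν : ℝ → ℝ) (hω : IsRadialWeight ω) (hν : IsRadialWeight ν)
    (hωD : Dhat ω) (hb : ProjBddH ω (tl ν)) :
    Dcheck ν := by
  obtain ⟨B, hB⟩ := dyadic_decay hω hν hωD hb
  obtain ⟨L, hL⟩ := exists_nat_gt (max (2 * B) 0)
  have hLB : 2 * B < L := (le_max_left _ _).trans_lt hL
  have hL0 : (0:ℝ) < L := (le_max_right _ _).trans_lt hL
  refine ⟨2 ^ (L+1), 2, one_lt_pow₀ (by norm_num) (by omega), by norm_num, fun r hr => ?_⟩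
  have hr1 : 0 < 1 - r := by linarith [hr.2]
  -- a dyadic point close to `r`
  obtain ⟨a, ha1, ha2⟩ : ∃ a : ℕ, (1/2:ℝ)^(a+1) < 1 - r ∧ 1 - r ≤ (1/2:ℝ)^a :=
    exists_nat_pow_near_of_lt_one hr1 (by linarith [hr.1]) (by norm_num) (by norm_num)
  have h1 : r ≤ dy (a+1) := by unfold dy; linarith
  have h2 : dy (a+1+L) ≤ 1 - (1 - r) / 2^(L+1) := by
    unfold dy
    have : (1 - r) / 2^(L+1) ≤ (1/2:ℝ)^a / 2^(L+1) := by gcongr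
    have e : (1/2:ℝ)^a / 2^(L+1) = (1/2:ℝ)^(a+1+L) := by
      rw [show a+1+L = a + (L+1) by omega, pow_add (1/2:ℝ) a, div_pow (1:ℝ) 2 (L+1)]
      simp [div_eq_mul_inv]
    linarith
  have h3 : 1 - (1 - r) / 2^(L+1) < 1 := by
    have : 0 < (1 - r) / 2^(L+1) := by positivity
    linarith
  have t1 := tl_anti hν hr.1 h1 (dy_lt _)
  have t2 := tl_anti hν (dy_nonneg _) h2 h3
  have t3 := hB a L
  have p1 := hν.2.2 (dy (a+1)) ⟨dy_nonneg _, dy_lt _⟩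
  have t4 : 2 * tl ν (dy (a+1+L)) ≤ tl ν (dy (a+1)) := by
    have : (L:ℝ) * (2 * tl ν (dy (a+1+L))) ≤ L * tl ν (dy (a+1)) := by nlinarith
    exact le_of_mul_le_mul_left this hL0
  linarith
end
end
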